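/- arXiv:2303.14161 — 5 statements merged into one kernel-verified Lean document; each statement's English description precedes it below -/
import Mathlib

section
/- For any vectors u, v ∈ ℝ^k, let sort(u) denote the vector obtained from u by writing its coordinates in increasing order (and likewise sort(v)). Then ‖sort(u) − sort(v)‖_∞ ≤ ‖u − v‖_∞, where ‖w‖_∞ = max over i of |w_i|. -/
theorem sort_le_sort_add_aux (k : ℕ) (u v : Fin k → ℝ) (i : Fin k) :
    u (Tuple.sort u i) ≤ v (Tuple.sort v i) + ‖u - v‖ := by
  obtain ⟨j, hj, hij⟩ : ∃ j ≤ i, i ≤ (Tuple.sort u).symm (Tuple.sort v j) := by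
    by_contra! h
    have hc : (Finset.Iic i).card ≤ (Finset.Iio i).card := by
      apply Finset.card_le_card_of_injOn (fun j => (Tuple.sort u).symm (Tuple.sort v j))
      · intro j hj
        simpa using h j (by simpa using hj)
      · intro a _ b _ hab
        simpa using hab
    simp at hc
  have h1 := Tuple.monotone_sort u hij
  have h2 := Tuple.monotone_sort v hj
  have h3 := norm_le_pi_norm (u - v) (Tuple.sort v j)
  simp only [Function.comp_apply, Equiv.apply_symm_apply] at h1 h2
  rw [Pi.sub_apply, Real.norm_eq_abs] at h3
  have h4 := le_abs_self (u (Tuple.sort v j) - v (Tuple.sort v j))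
  linarith

/-- Rewriting the coordinates of two vectors `u, v ∈ ℝ^k` in increasing order
does not increase the `L∞` distance `‖u - v‖_∞` (the sup norm on `Fin k → ℝ`). -/
theorem norm_sub_sort_le_norm_sub (k : ℕ) (u v : Fin k → ℝ) :
    ‖(u ∘ ⇑(Tuple.sort u)) - (v ∘ ⇑(Tuple.sort v))‖ ≤ ‖u - v‖ := by
  rw [pi_norm_le_iff_of_nonneg (norm_nonneg _)]
  intro i
  have h1 := sort_le_sort_add_aux k u v i
  have h2 := sort_le_sort_add_aux k v u i
  rw [norm_sub_rev v u] at h2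
  rw [Pi.sub_apply, Real.norm_eq_abs, abs_le]
  simp only [Function.comp_apply]
  constructor <;> linarith
end

section
/- Let D, D' : Fin h → Fin h → ℝ be symmetric matrices with zero diagonal. Let SDV(D) ∈ ℝ^{h(h−1)/2} be the vector of the strictly upper-triangular entries D i j (i < j) written in increasing order, and likewise SDV(D'). Then min over permutations ξ of Fin h of max over i < j of |D (ξ i) (ξ j) − D' i j| ≥ ‖SDV(D) − SDV(D')‖_∞. -/
/-- The Sorted Distance Vector of a matrix `D : Fin h → Fin h → ℝ`: the vector of the
`h(h-1)/2` strictly upper-triangular entries `D i j` (`i < j`) written in increasing order,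
indexed by `Fin` of the number of strictly increasing pairs in `Fin h × Fin h`. -/
noncomputable def SDV {h : ℕ} (D : Fin h → Fin h → ℝ) :
    Fin (Fintype.card {p : Fin h × Fin h // p.1 < p.2}) → ℝ :=
  let v : Fin (Fintype.card {p : Fin h × Fin h // p.1 < p.2}) → ℝ := fun i =>
    D ((Fintype.equivFin {p : Fin h × Fin h // p.1 < p.2}).symm i).1.1
      ((Fintype.equivFin {p : Fin h × Fin h // p.1 < p.2}).symm i).1.2
  v ∘ ⇑(Tuple.sort v)

theorem SDV_aux {n : ℕ} (f g : Fin n → ℝ) (hf : Monotone f) (hg : Monotone g) (c : ℝ)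
    (τ : Equiv.Perm (Fin n)) (hc : ∀ i, f (τ i) ≤ g i + c) (k : Fin n) : f k ≤ g k + c := by
  obtain ⟨i, hik, hki⟩ : ∃ i, i ≤ k ∧ k ≤ τ i := by
    by_contra! hcon
    have hcard : (Finset.Iic k).card ≤ (Finset.Iio k).card :=
      Finset.card_le_card_of_injOn τ (fun i hi => by
        have := hcon i (by simpa using hi)
        simpa using this) τ.injective.injOn
    simp at hcard
  linarith [hf hki, hc i, hg hik]

/-- The map induced on increasing pairs by a permutation. -/
def SDV_pairMap {h : ℕ} (ξ : Equiv.Perm (Fin h)) (p : {p : Fin h × Fin h // p.1 < p.2}) :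
    {p : Fin h × Fin h // p.1 < p.2} :=
  ⟨(min (ξ p.1.1) (ξ p.1.2), max (ξ p.1.1) (ξ p.1.2)), by
    have : ξ p.1.1 ≠ ξ p.1.2 := fun e => p.2.ne (ξ.injective e)
    simpa using this.symm⟩

theorem SDV_pairMap_injective {h : ℕ} (ξ : Equiv.Perm (Fin h)) :
    Function.Injective (SDV_pairMap ξ) := by
  rintro ⟨⟨a, b⟩, hab⟩ ⟨⟨c, d⟩, hcd⟩ e
  simp only [SDV_pairMap, Subtype.mk.injEq, Prod.mk.injEq] at e
  obtain ⟨e1, e2⟩ := e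
  have key : (ξ a = ξ c ∧ ξ b = ξ d) ∨ (ξ a = ξ d ∧ ξ b = ξ c) := by
    rcases le_total (ξ a) (ξ b) with h1 | h1 <;> rcases le_total (ξ c) (ξ d) with h2 | h2 <;>
      simp only [h1, h2, min_eq_left, min_eq_right, max_eq_left, max_eq_right] at e1 e2 <;>
      simp [e1, e2]
  simp only [ξ.injective.eq_iff] at key
  rcases key with ⟨rfl, rfl⟩ | ⟨rfl, rfl⟩
  · rfl
  · exact absurd hab (not_lt.2 (le_of_lt hcd))

theorem SDV_pairMap_apply {h : ℕ} (D : Fin h → Fin h → ℝ) (hD : ∀ i j, D i j = D j i)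
    (ξ : Equiv.Perm (Fin h)) (p : {p : Fin h × Fin h // p.1 < p.2}) :
    D (SDV_pairMap ξ p).1.1 (SDV_pairMap ξ p).1.2 = D (ξ p.1.1) (ξ p.1.2) := by
  simp only [SDV_pairMap]
  rcases le_total (ξ p.1.1) (ξ p.1.2) with h1 | h1 <;> simp [h1, hD]

/-- For symmetric matrices `D, D'` with zero diagonal, the minimum over permutations `ξ`
of `max_{i < j} |D (ξ i) (ξ j) - D' i j|` (expressed as the sup norm over the strictly
increasing pairs) is at least `‖SDV(D) - SDV(D')‖_∞`. -/
theorem SDV_lower_bound {h : ℕ} (D D' : Fin h → Fin h → ℝ)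
    (hDsymm : ∀ i j, D i j = D j i) (hD'symm : ∀ i j, D' i j = D' j i)
    (hDdiag : ∀ i, D i i = 0) (hD'diag : ∀ i, D' i i = 0) :
    ‖SDV D - SDV D'‖ ≤
      Finset.univ.inf' Finset.univ_nonempty fun ξ : Equiv.Perm (Fin h) =>
        ‖fun p : {p : Fin h × Fin h // p.1 < p.2} =>
          |D (ξ p.1.1) (ξ p.1.2) - D' p.1.1 p.1.2|‖ := by
  refine Finset.le_inf' _ _ fun ξ _ => ?_
  set c := ‖fun p : {p : Fin h × Fin h // p.1 < p.2} =>
          |D (ξ p.1.1) (ξ p.1.2) - D' p.1.1 p.1.2|‖ with hcdef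
  have hc : ∀ p : {p : Fin h × Fin h // p.1 < p.2},
      |D (ξ p.1.1) (ξ p.1.2) - D' p.1.1 p.1.2| ≤ c := fun p => by
    have := norm_le_pi_norm (fun p : {p : Fin h × Fin h // p.1 < p.2} =>
          |D (ξ p.1.1) (ξ p.1.2) - D' p.1.1 p.1.2|) p
    simpa [Real.norm_eq_abs, abs_abs] using this
  have hc0 : 0 ≤ c := norm_nonneg _
  clear_value c
  let e := Fintype.equivFin {p : Fin h × Fin h // p.1 < p.2}
  let P : Equiv.Perm {p : Fin h × Fin h // p.1 < p.2} :=
    Equiv.ofBijective _ (Finite.injective_iff_bijective.1 (SDV_pairMap_injective ξ))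
  have hP : ∀ p, D (P p).1.1 (P p).1.2 = D (ξ p.1.1) (ξ p.1.2) :=
    fun p => SDV_pairMap_apply D hDsymm ξ p
  let v : Fin (Fintype.card {p : Fin h × Fin h // p.1 < p.2}) → ℝ :=
    fun i => D (e.symm i).1.1 (e.symm i).1.2
  let v' : Fin (Fintype.card {p : Fin h × Fin h // p.1 < p.2}) → ℝ :=
    fun i => D' (e.symm i).1.1 (e.symm i).1.2
  have hS : SDV D = v ∘ Tuple.sort v := rfl
  have hS' : SDV D' = v' ∘ Tuple.sort v' := rfl
  have hm : Monotone (SDV D) := Tuple.monotone_sort v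
  have hm' : Monotone (SDV D') := Tuple.monotone_sort v'
  let τ : Equiv.Perm (Fin (Fintype.card {p : Fin h × Fin h // p.1 < p.2})) :=
    (Tuple.sort v').trans ((e.symm.trans (P.trans e)).trans (Tuple.sort v).symm)
  have hτ : ∀ i, |SDV D (τ i) - SDV D' i| ≤ c := fun i => by
    have h1 : SDV D (τ i) = D (P (e.symm (Tuple.sort v' i))).1.1
        (P (e.symm (Tuple.sort v' i))).1.2 := by
      simp [hS, τ, v]
    rw [h1, hP]
    exact hc (e.symm (Tuple.sort v' i))
  refine (pi_norm_le_iff_of_nonneg hc0).2 fun k => ?_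
  rw [Pi.sub_apply, Real.norm_eq_abs, abs_le]
  have A := SDV_aux _ _ hm hm' c τ (fun i => by linarith [(abs_le.1 (hτ i)).2]) k
  have B := SDV_aux _ _ hm' hm c τ.symm (fun i => by
    have := (abs_le.1 (hτ (τ.symm i))).1
    rw [Equiv.apply_symm_apply] at this
    linarith) k
  constructor <;> linarith
end

section
/- Let R, R' : Fin h → Fin k → ℝ be matrices. For each column j, let a_j = (1/h) · Σ_i R i j be the column average of R, and let a'_j be the column average of R'; let sort(a), sort(a') ∈ ℝ^k be these vectors of column averages written in increasing order. Then min over permutations ξ of Fin h and τ of Fin k of max over i, j of |R (ξ i) (τ j) − R' i j| ≥ ‖sort(a) − sort(a')‖_∞. -/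
/-- `sortVec v` rearranges the coordinates of a vector `v ∈ ℝ^k` in increasing order. -/
noncomputable def sortVec {k : ℕ} (v : Fin k → ℝ) : Fin k → ℝ := v ∘ ⇑(Tuple.sort v)

lemma sortVec_le_of_perm {k : ℕ} (a b : Fin k → ℝ) (τ : Equiv.Perm (Fin k)) (c : ℝ)
    (H : ∀ j, a (τ j) ≤ b j + c) (i : Fin k) : sortVec a i ≤ sortVec b i + c := by
  have hA : Monotone (sortVec a) := Tuple.monotone_sort a
  have hB : Monotone (sortVec b) := Tuple.monotone_sort b
  set π : Equiv.Perm (Fin k) := ((Tuple.sort b).trans τ).trans (Tuple.sort a).symm with hπ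
  have hπA : ∀ j, sortVec a (π j) ≤ sortVec b j + c := by
    intro j
    simpa [sortVec, hπ] using H (Tuple.sort b j)
  obtain ⟨j, hj, hij⟩ : ∃ j, j ≤ i ∧ i ≤ π j := by
    by_contra! hcon
    have h1 : (Finset.Iic i).card ≤ (Finset.Iio i).card :=
      Finset.card_le_card_of_injOn π
        (fun j hj => by
          have := hcon j (by simpa using hj)
          simpa using this)
        (π.injective.injOn)
    simp at h1
  linarith [hA hij, hπA j, hB hj]

lemma column_average_close {h : ℕ} (u v : Fin (h + 1) → ℝ) (ξ : Equiv.Perm (Fin (h + 1))) (c : ℝ)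
    (H : ∀ i, u (ξ i) ≤ v i + c) :
    ((h : ℝ) + 1)⁻¹ * ∑ i, u i ≤ ((h : ℝ) + 1)⁻¹ * ∑ i, v i + c := by
  have h1 : ∑ i, u i ≤ ∑ i, v i + ((h : ℝ) + 1) * c := by
    rw [← Equiv.sum_comp ξ u]
    refine (Finset.sum_le_sum fun i _ => H i).trans (le_of_eq ?_)
    simp [Finset.sum_add_distrib]
  have hp : (0 : ℝ) < (h : ℝ) + 1 := by positivity
  calc _ ≤ ((h : ℝ) + 1)⁻¹ * (∑ i, v i + ((h : ℝ) + 1) * c) := by gcongr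
    _ = _ := by field_simp

/-- For matrices `R, R' : Fin (h+1) → Fin (k+1) → ℝ`, the minimum over permutations
`ξ` of the rows and `τ` of the columns of `max_{i,j} |R (ξ i) (τ j) - R' i j|`
(expressed as the sup norm over pairs `(i, j)`) is at least the sup-norm distance between
the sorted vectors of column averages of `R` and of `R'`. -/
theorem column_averages_lower_bound {h k : ℕ} (R R' : Fin (h + 1) → Fin (k + 1) → ℝ) :
    ‖sortVec (fun j => ((h : ℝ) + 1)⁻¹ * ∑ i, R i j) -
        sortVec (fun j => ((h : ℝ) + 1)⁻¹ * ∑ i, R' i j)‖ ≤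
      Finset.univ.inf' Finset.univ_nonempty
        fun ξτ : Equiv.Perm (Fin (h + 1)) × Equiv.Perm (Fin (k + 1)) =>
          ‖fun p : Fin (h + 1) × Fin (k + 1) =>
            |R (ξτ.1 p.1) (ξτ.2 p.2) - R' p.1 p.2|‖ := by
  refine Finset.le_inf' _ _ ?_
  rintro ⟨ξ, τ⟩ -
  set c := ‖fun p : Fin (h + 1) × Fin (k + 1) => |R (ξ p.1) (τ p.2) - R' p.1 p.2|‖ with hc
  have H : ∀ i j, |R (ξ i) (τ j) - R' i j| ≤ c := by
    intro i j
    have := norm_le_pi_norm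
      (fun p : Fin (h + 1) × Fin (k + 1) => |R (ξ p.1) (τ p.2) - R' p.1 p.2|) (i, j)
    simpa [hc] using this
  refine (pi_norm_le_iff_of_nonneg (norm_nonneg _)).2 fun j => ?_
  rw [Pi.sub_apply, Real.norm_eq_abs, abs_sub_le_iff]
  constructor
  · have := sortVec_le_of_perm (fun j => ((h : ℝ) + 1)⁻¹ * ∑ i, R i j)
      (fun j => ((h : ℝ) + 1)⁻¹ * ∑ i, R' i j) τ c
      (fun j => column_average_close (fun i => R i (τ j)) (fun i => R' i j) ξ c
        (fun i => by linarith [(abs_le.1 (H i j)).2])) j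
    linarith
  · have := sortVec_le_of_perm (fun j => ((h : ℝ) + 1)⁻¹ * ∑ i, R' i j)
      (fun j => ((h : ℝ) + 1)⁻¹ * ∑ i, R i j) τ.symm c
      (fun j => column_average_close (fun i => R' i (τ.symm j)) (fun i => R i j) ξ.symm c
        (fun i => by
          have := (abs_le.1 (H (ξ.symm i) (τ.symm j))).1
          simp only [Equiv.apply_symm_apply] at this
          linarith)) j
    linarith
end

section
/- Let B : Fin k → ℝ^N and D : Fin l → ℝ^N be finite families of vectors with nonnegative weights w : Fin k → ℝ and w' : Fin l → ℝ satisfying Σ_i w i = 1 and Σ_j w' j = 1. Let f : Fin k → Fin l → ℝ be any flow with f i j ≥ 0, Σ_j f i j ≤ w i for every i, Σ_i f i j ≤ w' j for every j, and Σ_{i,j} f i j = 1. Then Σ_{i,j} f i j · ‖B i − D j‖_∞ ≥ ‖Σ_i (w i) • B i − Σ_j (w' j) • D j‖_∞; consequently the Earth Mover's Distance (the minimum of the left-hand side over all such flows) is at least the ‖·‖_∞-distance between the weighted centroids of the two distributions. -/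
/-- Any flow has cost at least the distance of the centroids. -/
theorem centroid_le_cost {k l N : ℕ}
    (B : Fin k → (Fin N → ℝ)) (D : Fin l → (Fin N → ℝ))
    (w : Fin k → ℝ) (w' : Fin l → ℝ)
    (hw1 : ∑ i, w i = 1) (hw'1 : ∑ j, w' j = 1)
    (g : Fin k → Fin l → ℝ) (h0 : ∀ i j, 0 ≤ g i j)
    (hr : ∀ i, ∑ j, g i j ≤ w i) (hc : ∀ j, ∑ i, g i j ≤ w' j)
    (ht : ∑ i, ∑ j, g i j = 1) :
    ‖(∑ i, w i • B i) - ∑ j, w' j • D j‖ ≤ ∑ i, ∑ j, g i j * ‖B i - D j‖ := by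
  have er : ∀ i, ∑ j, g i j = w i := fun i =>
    (Finset.sum_eq_sum_iff_of_le (fun i _ => hr i)).1 (ht.trans hw1.symm) i (Finset.mem_univ i)
  have ht2 : ∑ j, ∑ i, g i j = 1 := by rw [Finset.sum_comm]; exact ht
  have ec : ∀ j, ∑ i, g i j = w' j := fun j =>
    (Finset.sum_eq_sum_iff_of_le (fun j _ => hc j)).1 (ht2.trans hw'1.symm) j (Finset.mem_univ j)
  have e1 : ∑ i, w i • B i = ∑ i, ∑ j, g i j • B i :=
    Finset.sum_congr rfl fun i _ => by rw [← er i, Finset.sum_smul]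
  have e2 : ∑ j, w' j • D j = ∑ i, ∑ j, g i j • D j := by
    rw [Finset.sum_comm]
    exact Finset.sum_congr rfl fun j _ => by rw [← ec j, Finset.sum_smul]
  have e : (∑ i, w i • B i) - ∑ j, w' j • D j = ∑ i, ∑ j, g i j • (B i - D j) := by
    rw [e1, e2]
    simp only [smul_sub, Finset.sum_sub_distrib]
  rw [e]
  refine norm_sum_le_of_le _ fun i _ => norm_sum_le_of_le _ fun j _ => ?_
  rw [norm_smul, Real.norm_of_nonneg (h0 i j)]

/-- For weighted families `B : Fin k → ℝ^N`, `D : Fin l → ℝ^N` (with the sup norm on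
`Fin N → ℝ`) whose nonnegative weights `w, w'` sum to `1`, any flow `f` (nonnegative, with
row sums at most `w i`, column sums at most `w' j`, and total sum `1`) has cost
`∑_{i,j} f i j * ‖B i - D j‖_∞` at least the `‖·‖_∞`-distance between the weighted
centroids `∑ i, w i • B i` and `∑ j, w' j • D j`; consequently the Earth Mover's Distance
(the infimum of the cost over all such flows) is at least this distance of centroids. -/
theorem EMD_centroid_lower_bound {k l N : ℕ}
    (B : Fin k → (Fin N → ℝ)) (D : Fin l → (Fin N → ℝ))
    (w : Fin k → ℝ) (w' : Fin l → ℝ)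
    (hw : ∀ i, 0 ≤ w i) (hw' : ∀ j, 0 ≤ w' j)
    (hw1 : ∑ i, w i = 1) (hw'1 : ∑ j, w' j = 1)
    (f : Fin k → Fin l → ℝ) (hf0 : ∀ i j, 0 ≤ f i j)
    (hrow : ∀ i, ∑ j, f i j ≤ w i) (hcol : ∀ j, ∑ i, f i j ≤ w' j)
    (htot : ∑ i, ∑ j, f i j = 1) :
    ‖(∑ i, w i • B i) - ∑ j, w' j • D j‖ ≤ ∑ i, ∑ j, f i j * ‖B i - D j‖ ∧
    ‖(∑ i, w i • B i) - ∑ j, w' j • D j‖ ≤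
      sInf {c : ℝ | ∃ g : Fin k → Fin l → ℝ, (∀ i j, 0 ≤ g i j) ∧
        (∀ i, ∑ j, g i j ≤ w i) ∧ (∀ j, ∑ i, g i j ≤ w' j) ∧
        (∑ i, ∑ j, g i j = 1) ∧ c = ∑ i, ∑ j, g i j * ‖B i - D j‖} := by
  have key : ∀ g : Fin k → Fin l → ℝ, (∀ i j, 0 ≤ g i j) →
        (∀ i, ∑ j, g i j ≤ w i) → (∀ j, ∑ i, g i j ≤ w' j) →
        (∑ i, ∑ j, g i j = 1) →
        ‖(∑ i, w i • B i) - ∑ j, w' j • D j‖ ≤ ∑ i, ∑ j, g i j * ‖B i - D j‖ :=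
    fun g h0 hr hc ht => centroid_le_cost B D w w' hw1 hw'1 g h0 hr hc ht
  refine ⟨key f hf0 hrow hcol htot, le_csInf ⟨_, f, hf0, hrow, hcol, htot, rfl⟩ ?_⟩
  rintro c ⟨g, h0, hr, hc, ht, rfl⟩
  exact key g h0 hr hc ht
end

section
/- Let S₋ = {(−2,0,−2), (2,0,2), (−1,−1,0), (1,1,0), (0,1,−1)} and S₊ = {(−2,0,−2), (2,0,2), (−1,−1,0), (1,1,0), (0,1,1)} be 5-point subsets of Euclidean ℝ³. Then there is no isometry f : ℝ³ → ℝ³ with f(S₋) = S₊; indeed S₊ contains three points whose pairwise Euclidean distances are √2, √6, √6, while S₋ contains no such triple. -/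
/-- A point of Euclidean space `ℝ³` with given coordinates. -/
noncomputable def pt3 (x y z : ℝ) : EuclideanSpace ℝ (Fin 3) :=
  (WithLp.equiv 2 (Fin 3 → ℝ)).symm ![x, y, z]

/-- The 5-point cloud `S₋ = {(−2,0,−2), (2,0,2), (−1,−1,0), (1,1,0), (0,1,−1)}`. -/
noncomputable def Sminus : Set (EuclideanSpace ℝ (Fin 3)) :=
  {pt3 (-2) 0 (-2), pt3 2 0 2, pt3 (-1) (-1) 0, pt3 1 1 0, pt3 0 1 (-1)}

/-- The 5-point cloud `S₊ = {(−2,0,−2), (2,0,2), (−1,−1,0), (1,1,0), (0,1,1)}`. -/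
noncomputable def Splus : Set (EuclideanSpace ℝ (Fin 3)) :=
  {pt3 (-2) 0 (-2), pt3 2 0 2, pt3 (-1) (-1) 0, pt3 1 1 0, pt3 0 1 1}

theorem dist_pt3 (a b c x y z : ℝ) : dist (pt3 a b c) (pt3 x y z)
    = Real.sqrt ((a - x) ^ 2 + (b - y) ^ 2 + (c - z) ^ 2) := by
  rw [EuclideanSpace.dist_eq]
  simp [pt3, Fin.sum_univ_three, Real.dist_eq, sq_abs]

theorem dist_sq_pt3 (a b c x y z : ℝ) : dist (pt3 a b c) (pt3 x y z) ^ 2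
    = (a - x) ^ 2 + (b - y) ^ 2 + (c - z) ^ 2 := by
  rw [dist_pt3, Real.sq_sqrt (by positivity)]

theorem triple_sums {a b c : ℝ}
    (h : ({a, b, c} : Multiset ℝ) = {Real.sqrt 2, Real.sqrt 6, Real.sqrt 6}) :
    a ^ 2 + b ^ 2 + c ^ 2 = 14 ∧ (a ^ 2) ^ 2 + (b ^ 2) ^ 2 + (c ^ 2) ^ 2 = 76 := by
  have h1 := congrArg (fun m => (Multiset.map (fun x : ℝ => x ^ 2) m).sum) h
  have h2 := congrArg (fun m => (Multiset.map (fun x : ℝ => (x ^ 2) ^ 2) m).sum) h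
  simp only [Multiset.insert_eq_cons, Multiset.map_cons, Multiset.map_singleton,
    Multiset.sum_cons, Multiset.sum_singleton,
    Real.sq_sqrt (show (0 : ℝ) ≤ 2 by norm_num),
    Real.sq_sqrt (show (0 : ℝ) ≤ 6 by norm_num)] at h1 h2
  constructor <;> linarith

theorem Splus_triple : ∃ p ∈ Splus, ∃ q ∈ Splus, ∃ r ∈ Splus,
    ({dist p q, dist p r, dist q r} : Multiset ℝ)
      = {Real.sqrt 2, Real.sqrt 6, Real.sqrt 6} := by
  refine ⟨pt3 1 1 0, by simp [Splus], pt3 0 1 1, by simp [Splus], pt3 2 0 2,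
    by simp [Splus], ?_⟩
  simp only [dist_pt3]
  norm_num

theorem Sminus_no_triple : ¬ ∃ p ∈ Sminus, ∃ q ∈ Sminus, ∃ r ∈ Sminus,
    ({dist p q, dist p r, dist q r} : Multiset ℝ)
      = {Real.sqrt 2, Real.sqrt 6, Real.sqrt 6} := by
  rintro ⟨p, hp, q, hq, r, hr, h⟩
  obtain ⟨h1, h2⟩ := triple_sums h
  clear h
  simp only [Sminus, Set.mem_insert_iff, Set.mem_singleton_iff] at hp hq hr
  rcases hp with rfl | rfl | rfl | rfl | rfl <;>
  rcases hq with rfl | rfl | rfl | rfl | rfl <;>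
  rcases hr with rfl | rfl | rfl | rfl | rfl <;>
  · simp only [dist_sq_pt3] at h1 h2
    first
    | (exfalso; revert h1; norm_num; done)
    | (exfalso; revert h2; norm_num; done)

/-- No isometry of `ℝ³` (a distance-preserving bijection) maps `S₋` onto `S₊`: indeed,
`S₊` contains three points whose pairwise Euclidean distances are `√2, √6, √6`, while `S₋`
contains no such triple. -/
theorem Sminus_not_isometric_Splus :
    (¬ ∃ f : EuclideanSpace ℝ (Fin 3) → EuclideanSpace ℝ (Fin 3),
        Function.Bijective f ∧ (∀ p q, dist (f p) (f q) = dist p q) ∧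
        f '' Sminus = Splus) ∧
    (∃ p ∈ Splus, ∃ q ∈ Splus, ∃ r ∈ Splus,
        ({dist p q, dist p r, dist q r} : Multiset ℝ)
          = {Real.sqrt 2, Real.sqrt 6, Real.sqrt 6}) ∧
    ¬ ∃ p ∈ Sminus, ∃ q ∈ Sminus, ∃ r ∈ Sminus,
        ({dist p q, dist p r, dist q r} : Multiset ℝ)
          = {Real.sqrt 2, Real.sqrt 6, Real.sqrt 6} := by
  refine ⟨?_, Splus_triple, Sminus_no_triple⟩
  rintro ⟨f, -, hd, hf⟩
  obtain ⟨p, hp, q, hq, r, hr, h⟩ := Splus_triple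
  rw [← hf] at hp hq hr
  obtain ⟨p, hp, rfl⟩ := hp
  obtain ⟨q, hq, rfl⟩ := hq
  obtain ⟨r, hr, rfl⟩ := hr
  simp only [hd] at h
  exact Sminus_no_triple ⟨p, hp, q, hq, r, hr, h⟩
end
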